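/- Suppose θ ∈ ℝ is irrational, the ℤ-graded vector space V has Vⁿ ≠ 0 for some n ≠ 0, and the connection form ω = ω⁰ + α ∈ Con(A,δ) is not O(T²)-coinvariant (α has a nonzero ℤ²-homogeneous component of degree (m',−m') with m' ≠ 0). Then the left B-module isomorphism L_V : E_A(V) → E_{A_θ}(V) does not intertwine the associated connections: for ∇̄(a⊗v) := D̄(a)⊗v and ∇̄_θ(a⊗v) := D̄_θ(a)⊗v, one has (L¹⊗id) ∘ ∇̄ ≠ ∇̄_θ ∘ L_V. -/

import Mathlib

/-!
Fix `n ≠ 0` and `0 ≠ v ∈ Vⁿ`, and suppose that the two composites agree. Evaluating them at `a ⊗ v`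
with `a` of degree `(m+n, -m)`, cancelling `v` and applying `φ̄_θ` gives an identity in `Ω¹(A)`. The
terms `da` and `a ω⁰` carry the same phase `e^{πiθmn}` on both sides, while the component `α_{m'}` of
degree `(m', -m')` contributes `a α_{m'}` with phase `e^{πiθ(m+m')n}` on one side and
`e^{πiθ(m-m')n}` on the other. For irrational `θ` and `m' n ≠ 0` these phases differ
(`lphase_ne`), so that `a α_{m'} = 0` for every such `a`.

Homogeneous components are separated with the algebra endomorphism of `A` scaling degree `(p₁, p₂)`
by `2^{p₂}` (`scaleHom`). It induces an endomorphism of `Ω¹(A)` for which terms with distinct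
`m'` are eigenvectors with distinct eigenvalues (`eigen_sum_zero`). The same argument shows that each
`α_{m'}`, and not only their sum `α ∈ Ω¹(B)`, is fixed by `φ_θ`.

Finally take `a = z₁^n` and `a = z₂^n` (or powers of `z₁*`, `z₂*` when `n < 0`). The sphere relation
makes these two elements generate the unit ideal, whence `α_{m'} = 0`, a contradiction.
-/

set_option synthInstance.maxHeartbeats 1000000
set_option maxHeartbeats 1000000

open scoped TensorProduct
noncomputable section

/-- The total-degree-`n` component of a `ℤ²`-graded module. -/
def totalDeg {A : Type} [AddCommMonoid A] [Module ℂ A]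
    (𝒜 : ℤ × ℤ → Submodule ℂ A) (n : ℤ) : Submodule ℂ A :=
  ⨆ (p : ℤ × ℤ) (_ : p.1 + p.2 = n), 𝒜 p

/-- The phase factor `e^{πiθ(m₁m₂' − m₂m₁')}`. -/
def phase (θ : ℝ) (p q : ℤ × ℤ) : ℂ :=
  Complex.exp (Complex.I * ((Real.pi * θ : ℝ) : ℂ) * ((p.1 * q.2 - p.2 * q.1 : ℤ) : ℂ))

/-- The cotriangular structure phase `R_θ(t_u ⊗ t_w) = e^{−2πiθ(u₁w₂ − u₂w₁)}`. -/
def rphase (θ : ℝ) (u w : ℤ × ℤ) : ℂ :=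
  Complex.exp (-(Complex.I * ((2 * Real.pi * θ : ℝ) : ℂ) * ((u.1 * w.2 - u.2 * w.1 : ℤ) : ℂ)))

/-- The phase factor `e^{πiθmn}`. -/
def lphase (θ : ℝ) (m n : ℤ) : ℂ :=
  Complex.exp (Complex.I * ((Real.pi * θ : ℝ) : ℂ) * ((m * n : ℤ) : ℂ))

/-- The `ℤ²`-degree-`p` component of `A ⊗ A`. -/
def tensorDeg {A : Type} [CommRing A] [Algebra ℂ A]
    (𝒜 : ℤ × ℤ → Submodule ℂ A) (p : ℤ × ℤ) : Submodule ℂ (A ⊗[ℂ] A) :=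
  Submodule.span ℂ
    {x : A ⊗[ℂ] A | ∃ (q r : ℤ × ℤ), ∃ a ∈ 𝒜 q, ∃ a' ∈ 𝒜 r, q + r = p ∧ x = a ⊗ₜ[ℂ] a'}

/-- The vector space underlying the associated module `E_A(V) = ⊕ₙ A⁽ⁿ⁾ ⊗ Vⁿ`. -/
def assocModule {A : Type} [CommRing A] [Algebra ℂ A]
    (𝒜 : ℤ × ℤ → Submodule ℂ A)
    {V : Type} [AddCommGroup V] [Module ℂ V] (𝒱 : ℤ → Submodule ℂ V) :
    Submodule ℂ (A ⊗[ℂ] V) :=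
  Submodule.span ℂ
    {x : A ⊗[ℂ] V | ∃ (m n : ℤ) (a : A) (v : V),
      a ∈ 𝒜 (m + n, -m) ∧ v ∈ 𝒱 n ∧ x = a ⊗ₜ[ℂ] v}

/-! ### Phases -/

/-- The phases `e^{πiθ(m+k)n}` and `e^{πiθ(m-k)n}` of the degree-`(k, -k)` part of the potential
on the two sides of the intertwining relation are distinct; the second one arises as
`e^{πiθmn}` times the phase of the star product. -/
lemma lphase_ne {θ : ℝ} (hθ : Irrational θ) (m : ℤ) {n k : ℤ} (hn : n ≠ 0) (hk : k ≠ 0) :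
    lphase θ (m + k) n ≠ lphase θ m n * phase θ (m + n, -m) (k, -k) := by
  intro h
  unfold lphase phase at h
  rw [← Complex.exp_add, Complex.exp_eq_exp_iff_exists_int] at h
  obtain ⟨N, hN⟩ := h
  have hpi : (Real.pi : ℂ) ≠ 0 := by exact_mod_cast Real.pi_ne_zero
  -- Comparing exponents modulo `2πi` gives `θ * (k * n) = N`.
  have h1 : (Complex.I * (Real.pi : ℂ) * 2) * ((θ : ℂ) * ((k : ℂ) * n))
      = (Complex.I * (Real.pi : ℂ) * 2) * (N : ℂ) := by
    push_cast at hN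
    linear_combination hN
  have h2 := mul_left_cancel₀ (by simp [hpi]) h1
  have h3 : θ * ((k * n : ℤ) : ℝ) = ((N : ℤ) : ℝ) := by
    push_cast
    exact_mod_cast h2
  exact (hθ.mul_intCast (mul_ne_zero hk hn)).ne_int N h3

lemma phase_zero_left (θ : ℝ) (q : ℤ × ℤ) : phase θ 0 q = 1 := by simp [phase]

lemma phase_zero_right (θ : ℝ) (q : ℤ × ℤ) : phase θ q 0 = 1 := by simp [phase]

/-- The phase is a bicharacter, hence satisfies the 2-cocycle identity. -/
lemma phase_cocycle (θ : ℝ) (p q r : ℤ × ℤ) :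
    phase θ p q * phase θ (p + q) r = phase θ p (q + r) * phase θ q r := by
  unfold phase
  rw [← Complex.exp_add, ← Complex.exp_add]
  congr 1
  push_cast [Prod.fst_add, Prod.snd_add]
  ring

/-! ### Separation of homogeneous components -/

lemma eigen_sum_zero {M : Type*} [AddCommGroup M] [Module ℂ M] (f : M →ₗ[ℂ] M)
    (s : Finset ℤ) (x : ℤ → M) (hx : ∀ i ∈ s, f (x i) = ((2 : ℂ) ^ (-i)) • x i)
    (h0 : ∑ i ∈ s, x i = 0) : ∀ i ∈ s, x i = 0 := by
  have hinj : Function.Injective (fun i : ℤ => (2 : ℂ) ^ (-i)) := by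
    intro i j hij
    have h : ((2 : ℝ) ^ (-i)) = (2 : ℝ) ^ (-j) := by
      have h' : (2 : ℂ) ^ (-i) = (2 : ℂ) ^ (-j) := hij
      exact Complex.ofReal_injective (by push_cast; exact h')
    exact neg_injective (zpow_right_injective₀ (by norm_num) (by norm_num) h)
  have hind := (Module.End.eigenspaces_iSupIndep f).comp hinj
  rw [iSupIndep_iff_finsetSum_eq_zero_imp_eq_zero] at hind
  exact hind s x (fun i hi => Module.End.mem_eigenspace_iff.mpr (hx i hi)) h0

section Graded

variable {A : Type} [CommRing A] [Algebra ℂ A] (𝒜 : ℤ × ℤ → Submodule ℂ A)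

/-- The algebra endomorphism of `A` multiplying the degree-`p` component by `2 ^ p.2`. -/
def scaleHom [GradedAlgebra 𝒜] : A →ₐ[ℂ] A :=
  (DirectSum.toAlgebra ℂ (fun p => 𝒜 p) (fun p => ((2 : ℂ) ^ p.2) • (𝒜 p).subtype)
    (by
      change ((2 : ℂ) ^ (0 : ℤ)) • (1 : A) = 1
      simp)
    (by
      intro i j a b
      change ((2 : ℂ) ^ (i.2 + j.2)) • ((a : A) * (b : A))
        = (((2 : ℂ) ^ i.2) • (a : A)) * (((2 : ℂ) ^ j.2) • (b : A))
      rw [zpow_add₀ two_ne_zero, smul_mul_smul_comm])).comp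
    (DirectSum.decomposeAlgEquiv 𝒜 : A →ₐ[ℂ] _)

lemma scaleHom_apply [GradedAlgebra 𝒜] {p : ℤ × ℤ} {a : A} (ha : a ∈ 𝒜 p) :
    scaleHom 𝒜 a = ((2 : ℂ) ^ p.2) • a := by
  have h : DirectSum.decomposeAlgEquiv 𝒜 a = DirectSum.of (fun p => 𝒜 p) p ⟨a, ha⟩ :=
    DirectSum.decompose_of_mem 𝒜 ha
  rw [scaleHom, AlgHom.comp_apply]
  erw [h, DirectSum.toAlgebra_apply, DirectSum.toSemiring_of]
  rfl

lemma scaleHom_tensor [GradedAlgebra 𝒜] {p : ℤ × ℤ} {x : A ⊗[ℂ] A} (hx : x ∈ tensorDeg 𝒜 p) :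
    Algebra.TensorProduct.map (scaleHom 𝒜) (scaleHom 𝒜) x = ((2 : ℂ) ^ p.2) • x := by
  refine Submodule.span_induction ?_ (by simp) ?_ ?_ hx
  · rintro _ ⟨q, r, a, ha, a', ha', rfl, rfl⟩
    rw [Algebra.TensorProduct.map_tmul, scaleHom_apply 𝒜 ha, scaleHom_apply 𝒜 ha',
      TensorProduct.smul_tmul_smul, Prod.snd_add, zpow_add₀ two_ne_zero]
  · intro x y _ _ hx hy
    rw [map_add, hx, hy, smul_add]
  · intro c x _ hx
    rw [map_smul, hx, smul_comm]

/-- The square of the kernel of multiplication is stable under the scaling map, because algebra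
homomorphisms commute with multiplication. -/
lemma scaleHom_sq [GradedAlgebra 𝒜] (K : Submodule ℂ (A ⊗[ℂ] A))
    (hK : K = LinearMap.ker (LinearMap.mul' ℂ A)) :
    K * K ≤ (K * K).comap
      (Algebra.TensorProduct.map (scaleHom 𝒜) (scaleHom 𝒜)).toLinearMap := by
  have hmul : ∀ x : A ⊗[ℂ] A,
      LinearMap.mul' ℂ A (Algebra.TensorProduct.map (scaleHom 𝒜) (scaleHom 𝒜) x)
        = scaleHom 𝒜 (LinearMap.mul' ℂ A x) := by
    intro x
    induction x with
    | zero => simp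
    | tmul a b => simp
    | add x y hx hy => simp only [map_add, hx, hy]
  have hle : K.map (Algebra.TensorProduct.map (scaleHom 𝒜) (scaleHom 𝒜)).toLinearMap ≤ K := by
    rintro _ ⟨x, hx, rfl⟩
    subst hK
    simp only [SetLike.mem_coe, LinearMap.mem_ker] at hx ⊢
    rw [AlgHom.toLinearMap_apply, hmul, hx, map_zero]
  rw [← Submodule.map_le_iff_le_comap, Submodule.map_mul]
  exact mul_le_mul' hle hle

lemma tmul_mem_tensorDeg {p q : ℤ × ℤ} {a a' : A} (ha : a ∈ 𝒜 p) (ha' : a' ∈ 𝒜 q) :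
    a ⊗ₜ[ℂ] a' ∈ tensorDeg 𝒜 (p + q) :=
  Submodule.subset_span ⟨p, q, a, ha, a', ha', rfl, rfl⟩

lemma mulLeft_mem_tensorDeg [GradedAlgebra 𝒜] {p q : ℤ × ℤ} {a : A} (ha : a ∈ 𝒜 p)
    {x : A ⊗[ℂ] A} (hx : x ∈ tensorDeg 𝒜 q) :
    TensorProduct.map (LinearMap.mulLeft ℂ a) LinearMap.id x ∈ tensorDeg 𝒜 (p + q) := by
  refine Submodule.span_induction ?_ (by simp) ?_ ?_ hx
  · rintro _ ⟨q, r, c, hc, c', hc', rfl, rfl⟩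
    rw [TensorProduct.map_tmul, ← add_assoc]
    exact tmul_mem_tensorDeg 𝒜 (SetLike.GradedMul.mul_mem ha hc) hc'
  · intro x y _ _ hx hy
    rw [map_add]
    exact add_mem hx hy
  · intro c x _ hx
    rw [map_smul]
    exact Submodule.smul_mem _ _ hx

lemma mem_totalDeg {p : ℤ × ℤ} {n : ℤ} (h : p.1 + p.2 = n) {a : A} (ha : a ∈ 𝒜 p) :
    a ∈ totalDeg 𝒜 n :=
  (le_iSup₂_of_le (f := fun (p : ℤ × ℤ) (_ : p.1 + p.2 = n) => 𝒜 p) p h le_rfl) ha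

lemma totalDeg_induction {n : ℤ} {P : A → Prop} (h0 : P 0)
    (hadd : ∀ x y, P x → P y → P (x + y))
    (hmem : ∀ p : ℤ × ℤ, p.1 + p.2 = n → ∀ a ∈ 𝒜 p, P a) {a : A}
    (ha : a ∈ totalDeg 𝒜 n) : P a := by
  unfold totalDeg at ha
  refine Submodule.iSup_induction _ (motive := P) ha ?_ h0 hadd
  intro p x hx
  by_cases hp : p.1 + p.2 = n
  · exact hmem p hp x (by simpa [hp] using hx)
  · have hx0 : x = 0 := by simpa [hp] using hx
    exact hx0 ▸ h0

/-! ### The phase map -/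

lemma phaseMap_mem {θ : ℝ} {φ : A ⊗[ℂ] A →ₗ[ℂ] A ⊗[ℂ] A}
    (hφ : ∀ (p q : ℤ × ℤ), ∀ a ∈ 𝒜 p, ∀ a' ∈ 𝒜 q,
      φ (a ⊗ₜ[ℂ] a') = phase θ p q • (a ⊗ₜ[ℂ] a'))
    {p : ℤ × ℤ} {x : A ⊗[ℂ] A} (hx : x ∈ tensorDeg 𝒜 p) :
    φ x ∈ tensorDeg 𝒜 p := by
  refine Submodule.span_induction ?_ (by simp) ?_ ?_ hx
  · rintro _ ⟨q, r, a, ha, a', ha', rfl, rfl⟩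
    rw [hφ q r a ha a' ha']
    exact Submodule.smul_mem _ _ (tmul_mem_tensorDeg 𝒜 ha ha')
  · intro x y _ _ hx hy
    rw [map_add]
    exact add_mem hx hy
  · intro c x _ hx
    rw [map_smul]
    exact Submodule.smul_mem _ _ hx

/-- Up to a phase, `φ_θ` turns the deformed left action of `a` into the classical one. -/
lemma phaseMap_stp [GradedAlgebra 𝒜] {θ : ℝ} {φ : A ⊗[ℂ] A →ₗ[ℂ] A ⊗[ℂ] A}
    (hφ : ∀ (p q : ℤ × ℤ), ∀ a ∈ 𝒜 p, ∀ a' ∈ 𝒜 q,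
      φ (a ⊗ₜ[ℂ] a') = phase θ p q • (a ⊗ₜ[ℂ] a'))
    {stp : A →ₗ[ℂ] A →ₗ[ℂ] A}
    (hstp : ∀ (p q : ℤ × ℤ), ∀ a ∈ 𝒜 p, ∀ a' ∈ 𝒜 q, stp a a' = phase θ p q • (a * a'))
    {p q : ℤ × ℤ} {a : A} (ha : a ∈ 𝒜 p) {x : A ⊗[ℂ] A} (hx : x ∈ tensorDeg 𝒜 q) :
    φ (TensorProduct.map (stp a) LinearMap.id x)
      = phase θ p q • TensorProduct.map (LinearMap.mulLeft ℂ a) LinearMap.id (φ x) := by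
  refine Submodule.span_induction ?_ (by simp) ?_ ?_ hx
  · rintro _ ⟨q, r, c, hc, c', hc', rfl, rfl⟩
    rw [TensorProduct.map_tmul, hstp p q a ha c hc, hφ q r c hc c' hc', map_smul,
      TensorProduct.map_tmul, ← TensorProduct.smul_tmul', map_smul, LinearMap.id_apply,
      hφ (p + q) r _ (SetLike.GradedMul.mul_mem ha hc) c' hc', smul_smul, smul_smul,
      phase_cocycle, LinearMap.mulLeft_apply]
  · intro x y _ _ hx hy
    simp only [map_add, hx, hy, smul_add]
  · intro c x _ hx
    rw [map_smul, map_smul, hx, map_smul, map_smul, smul_comm]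

/-- `φ_θ` fixes the universal forms on `B`, because elements of degrees `(j, -j)` and `(k, -k)`
have trivial mutual phase. -/
lemma phaseMap_base [GradedAlgebra 𝒜] {θ : ℝ} {φ : A ⊗[ℂ] A →ₗ[ℂ] A ⊗[ℂ] A}
    (hφ : ∀ (p q : ℤ × ℤ), ∀ a ∈ 𝒜 p, ∀ a' ∈ 𝒜 q,
      φ (a ⊗ₜ[ℂ] a') = phase θ p q • (a ⊗ₜ[ℂ] a'))
    {x : A ⊗[ℂ] A}
    (hx : x ∈ Submodule.span ℂ {y : A ⊗[ℂ] A | ∃ b ∈ totalDeg 𝒜 0, ∃ b' ∈ totalDeg 𝒜 0,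
        y = b ⊗ₜ[ℂ] b' - (b * b') ⊗ₜ[ℂ] (1 : A)}) : φ x = x := by
  have hone : (1 : A) ∈ 𝒜 0 := SetLike.GradedOne.one_mem
  have h1 : ∀ a : A, φ (a ⊗ₜ[ℂ] (1 : A)) = a ⊗ₜ[ℂ] (1 : A) := by
    intro a
    induction a using DirectSum.Decomposition.inductionOn 𝒜 with
    | zero => simp
    | homogeneous a => rw [hφ _ 0 _ a.2 _ hone, phase_zero_right, one_smul]
    | add x y hx hy => rw [TensorProduct.add_tmul, map_add, hx, hy]
  have h2 : ∀ b ∈ totalDeg 𝒜 0, ∀ b' ∈ totalDeg 𝒜 0, φ (b ⊗ₜ[ℂ] b') = b ⊗ₜ[ℂ] b' := by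
    intro b hb b' hb'
    refine totalDeg_induction 𝒜 (P := fun b => φ (b ⊗ₜ[ℂ] b') = b ⊗ₜ[ℂ] b') (by simp) ?_ ?_ hb
    · intro x y hx hy
      rw [TensorProduct.add_tmul, map_add, hx, hy]
    intro p hp b hb
    refine totalDeg_induction 𝒜 (P := fun b' => φ (b ⊗ₜ[ℂ] b') = b ⊗ₜ[ℂ] b') (by simp) ?_ ?_ hb'
    · intro x y hx hy
      rw [TensorProduct.tmul_add, map_add, hx, hy]
    intro q hq b' hb'
    have hph : p.1 * q.2 - p.2 * q.1 = 0 := by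
      rw [show p.2 = -p.1 by omega, show q.2 = -q.1 by omega]
      ring
    rw [hφ p q b hb b' hb', phase, hph]
    simp
  refine Submodule.span_induction ?_ (by simp) ?_ ?_ hx
  · rintro _ ⟨b, hb, b', hb', rfl⟩
    rw [map_sub, h1, h2 b hb b' hb']
  · intro x y _ _ hx hy
    rw [map_add, hx, hy]
  · intro c x _ hx
    rw [map_smul, hx]

end Graded

/-- if `θ` is irrational, `Vⁿ ≠ 0` for some `n ≠ 0`, and the connection
`ω = ω⁰ + α ∈ Con(A,δ)` is not `O(T²)`-coinvariant, then the left `B`-module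
isomorphism `L_V : E_A(V) → E_{A_θ}(V)` does not intertwine the associated connections
`∇̄(a⊗v) = D̄(a)⊗v` and `∇̄_θ(a⊗v) = D̄_θ(a)⊗v`: one has `(L¹⊗id) ∘ ∇̄ ≠ ∇̄_θ ∘ L_V`. -/
theorem associated_connections_not_intertwined
    (A : Type) [CommRing A] [Algebra ℂ A]
    (𝒜 : ℤ × ℤ → Submodule ℂ A) [GradedAlgebra 𝒜]
    (z1 z2 z1s z2s : A)
    (hz1 : z1 ∈ 𝒜 (1, 0)) (hz2 : z2 ∈ 𝒜 (0, 1))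
    (hz1s : z1s ∈ 𝒜 (-1, 0)) (hz2s : z2s ∈ 𝒜 (0, -1))
    (hrel : z1s * z1 + z2s * z2 = 1)
    (huniv : ∀ (C : Type) [CommRing C] [Algebra ℂ C] (w1 w2 w1s w2s : C),
      w1s * w1 + w2s * w2 = 1 →
      ∃! f : A →ₐ[ℂ] C, f z1 = w1 ∧ f z2 = w2 ∧ f z1s = w1s ∧ f z2s = w2s)
    (θ : ℝ) (hθ : Irrational θ)
    (stp : A →ₗ[ℂ] A →ₗ[ℂ] A)
    (hstp : ∀ (p q : ℤ × ℤ), ∀ a ∈ 𝒜 p, ∀ a' ∈ 𝒜 q, stp a a' = phase θ p q • (a * a'))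
    (bmul : A ⊗[ℂ] A →ₗ[ℂ] A ⊗[ℂ] A →ₗ[ℂ] A ⊗[ℂ] A)
    (hbmul : ∀ (p p' u u' : ℤ × ℤ), ∀ a ∈ 𝒜 p, ∀ a' ∈ 𝒜 p', ∀ c ∈ 𝒜 u, ∀ c' ∈ 𝒜 u',
      bmul (a ⊗ₜ[ℂ] a') (c ⊗ₜ[ℂ] c')
        = rphase θ u p' • ((stp a c) ⊗ₜ[ℂ] (stp a' c')))
    (φ : A ⊗[ℂ] A →ₗ[ℂ] A ⊗[ℂ] A)
    (hφ : ∀ (p q : ℤ × ℤ), ∀ a ∈ 𝒜 p, ∀ a' ∈ 𝒜 q,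
      φ (a ⊗ₜ[ℂ] a') = phase θ p q • (a ⊗ₜ[ℂ] a'))
    -- the `ℤ`-graded vector space `V`, with non-trivial coaction
    (V : Type) [AddCommGroup V] [Module ℂ V]
    (𝒱 : ℤ → Submodule ℂ V) [DirectSum.Decomposition 𝒱]
    (hV : ∃ n : ℤ, n ≠ 0 ∧ 𝒱 n ≠ ⊥)
    -- the natural isomorphism `L_V`
    (L : A ⊗[ℂ] V →ₗ[ℂ] A ⊗[ℂ] V)
    (hL : ∀ (m n : ℤ) (a : A) (v : V), a ∈ 𝒜 (m + n, -m) → v ∈ 𝒱 n →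
      L (a ⊗ₜ[ℂ] v) = lphase θ m n • (a ⊗ₜ[ℂ] v)) :
    ∀ (K K2 Kθ K2θ : Submodule ℂ (A ⊗[ℂ] A)) (ωrep ωθrep : A ⊗[ℂ] A)
      (BdB : Submodule ℂ (A ⊗[ℂ] A)),
      K = LinearMap.ker (LinearMap.mul' ℂ A) →
      K2 = K * K →
      Kθ = LinearMap.ker (TensorProduct.lift stp) →
      K2θ = Submodule.span ℂ {y : A ⊗[ℂ] A | ∃ x ∈ Kθ, ∃ x' ∈ Kθ, y = bmul x x'} →
      ωrep = z1s ⊗ₜ[ℂ] z1 - (z1s * z1) ⊗ₜ[ℂ] (1 : A)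
        + (z2s ⊗ₜ[ℂ] z2 - (z2s * z2) ⊗ₜ[ℂ] (1 : A)) →
      ωθrep = (stp z1s 1) ⊗ₜ[ℂ] z1 - (stp z1s z1) ⊗ₜ[ℂ] (1 : A)
        + ((stp z2s 1) ⊗ₜ[ℂ] z2 - (stp z2s z2) ⊗ₜ[ℂ] (1 : A)) →
      BdB = Submodule.span ℂ {y : A ⊗[ℂ] A | ∃ b ∈ totalDeg 𝒜 0, ∃ b' ∈ totalDeg 𝒜 0,
        y = b ⊗ₜ[ℂ] b' - (b * b') ⊗ₜ[ℂ] (1 : A)} →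
      -- the non-`O(T²)`-coinvariant gauge potential `α ∈ Ω¹(B)`
      ∀ (αr : A ⊗[ℂ] A), αr ∈ BdB →
      ∀ (s : Finset ℤ) (αc : ℤ → A ⊗[ℂ] A),
        αr = ∑ m' ∈ s, αc m' →
        (∀ m' ∈ s, αc m' ∈ tensorDeg 𝒜 (m', -m')) →
        (∃ m' ∈ s, m' ≠ 0 ∧ K2.mkQ (αc m') ≠ 0) →
      ∀ (lact : A → ((A ⊗[ℂ] A) ⧸ K2) →ₗ[ℂ] ((A ⊗[ℂ] A) ⧸ K2)),
        (∀ (a : A) (x : A ⊗[ℂ] A), lact a (K2.mkQ x)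
          = K2.mkQ (TensorProduct.map (LinearMap.mulLeft ℂ a) LinearMap.id x)) →
      ∀ (lactθ : A → ((A ⊗[ℂ] A) ⧸ K2θ) →ₗ[ℂ] ((A ⊗[ℂ] A) ⧸ K2θ)),
        (∀ (a : A) (x : A ⊗[ℂ] A), lactθ a (K2θ.mkQ x)
          = K2θ.mkQ (TensorProduct.map (stp a) LinearMap.id x)) →
      ∀ (D : A →ₗ[ℂ] ((A ⊗[ℂ] A) ⧸ K2)),
        (∀ (n : ℤ), ∀ a ∈ totalDeg 𝒜 n,
          D a = K2.mkQ ((1 : A) ⊗ₜ[ℂ] a - a ⊗ₜ[ℂ] (1 : A))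
            - (n : ℂ) • lact a (K2.mkQ (ωrep + αr))) →
      ∀ (Dθ : A →ₗ[ℂ] ((A ⊗[ℂ] A) ⧸ K2θ)),
        (∀ (n : ℤ), ∀ a ∈ totalDeg 𝒜 n,
          Dθ a = K2θ.mkQ ((1 : A) ⊗ₜ[ℂ] a - a ⊗ₜ[ℂ] (1 : A))
            - (n : ℂ) • lactθ a (K2θ.mkQ (ωθrep + αr))) →
      ∀ (φbar : ((A ⊗[ℂ] A) ⧸ K2θ) →ₗ[ℂ] ((A ⊗[ℂ] A) ⧸ K2)),
        (∀ x : A ⊗[ℂ] A, φbar (K2θ.mkQ x) = K2.mkQ (φ x)) →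
      ∀ (L1 : ((A ⊗[ℂ] A) ⧸ K2) →ₗ[ℂ] ((A ⊗[ℂ] A) ⧸ K2θ)),
        (∀ (m n : ℤ), ∀ x ∈ tensorDeg 𝒜 (m + n, -m),
          φbar (L1 (K2.mkQ x)) = lphase θ m n • K2.mkQ x) →
      -- conclusion: `(L¹ ⊗ id) ∘ ∇̄ ≠ ∇̄_θ ∘ L_V` on `E_A(V)`
      ∃ ξ ∈ assocModule 𝒜 𝒱,
        TensorProduct.map L1 (LinearMap.id : V →ₗ[ℂ] V)
            (TensorProduct.map D (LinearMap.id : V →ₗ[ℂ] V) ξ)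
          ≠ TensorProduct.map Dθ (LinearMap.id : V →ₗ[ℂ] V) (L ξ) := by
  intro K K2 Kθ K2θ ωrep ωθrep BdB hK hK2 _ _ hω hωθ hBdB αr hαr s αc hαsum hαc hnz lact hlact
    lactθ hlactθ D hD Dθ hDθ φbar hφbar L1 hL1
  obtain ⟨k, hks, hk0, hkne⟩ := hnz
  obtain ⟨n, hn0, hVn⟩ := hV
  obtain ⟨v, hv, hv0⟩ := (Submodule.ne_bot_iff _).mp hVn
  by_contra! hcon
  have hone : (1 : A) ∈ 𝒜 0 := SetLike.GradedOne.one_mem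
  have hφα : ∀ i ∈ s, φ (αc i) = αc i := by
    have h := eigen_sum_zero
      (Algebra.TensorProduct.map (scaleHom 𝒜) (scaleHom 𝒜)).toLinearMap s
      (fun i => φ (αc i) - αc i)
      (fun i hi => scaleHom_tensor 𝒜 (p := (i, -i))
        (sub_mem (phaseMap_mem 𝒜 hφ (hαc i hi)) (hαc i hi)))
      (by
        rw [Finset.sum_sub_distrib, ← map_sum, ← hαsum, sub_eq_zero]
        exact phaseMap_base 𝒜 hφ (hBdB ▸ hαr))
    exact fun i hi => sub_eq_zero.mp (h i hi)
  have hωdeg : ωrep ∈ tensorDeg 𝒜 0 := by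
    have aux : ∀ (p q : ℤ × ℤ) (a b : A), a ∈ 𝒜 p → b ∈ 𝒜 q → p + q = 0 →
        a ⊗ₜ[ℂ] b - (a * b) ⊗ₜ[ℂ] (1 : A) ∈ tensorDeg 𝒜 0 := by
      intro p q a b ha hb hpq
      refine sub_mem (hpq ▸ tmul_mem_tensorDeg 𝒜 ha hb) ?_
      have h := tmul_mem_tensorDeg 𝒜 (SetLike.GradedMul.mul_mem ha hb) hone
      rwa [hpq, add_zero] at h
    rw [hω]
    exact add_mem (aux _ _ _ _ hz1s hz1 (by simp)) (aux _ _ _ _ hz2s hz2 (by simp))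
  have hωωθ : ωθrep = ωrep := by
    rw [hω, hωθ, hstp _ 0 _ hz1s _ hone, hstp _ 0 _ hz2s _ hone, hstp _ _ _ hz1s _ hz1,
      hstp _ _ _ hz2s _ hz2]
    simp [phase]
  have hφω : φ ωrep = ωrep := by
    rw [hω, map_add, map_sub, map_sub, hφ _ _ _ hz1s _ hz1, hφ _ _ _ hz2s _ hz2,
      hφ _ 0 _ (SetLike.GradedMul.mul_mem hz1s hz1) _ hone,
      hφ _ 0 _ (SetLike.GradedMul.mul_mem hz2s hz2) _ hone]
    simp [phase]
  -- The scaling map preserves `K2`, hence acts on `Ω¹(A)`.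
  have hK2s : K2 ≤ K2.comap
      (Algebra.TensorProduct.map (scaleHom 𝒜) (scaleHom 𝒜)).toLinearMap := by
    rw [hK2]
    exact scaleHom_sq 𝒜 K hK
  -- Elements of degree `(m + n, -m)` annihilate the component `α_k`.
  have key : ∀ (m : ℤ) (a : A), a ∈ 𝒜 (m + n, -m) →
      K2.mkQ (TensorProduct.map (LinearMap.mulLeft ℂ a) LinearMap.id (αc k)) = 0 := by
    intro m a ha
    have hat : a ∈ totalDeg 𝒜 n := mem_totalDeg 𝒜 (by simp) ha
    have hξ := hcon (a ⊗ₜ[ℂ] v) (Submodule.subset_span ⟨m, n, a, v, ha, hv, rfl⟩)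
    rw [hL m n a v ha hv, map_smul, TensorProduct.map_tmul, TensorProduct.map_tmul,
      TensorProduct.map_tmul, TensorProduct.smul_tmul', LinearMap.id_apply,
      LinearMap.id_apply] at hξ
    -- Cancel the nonzero vector `v` with a functional taking the value `1` on it.
    have heq : L1 (D a) = lphase θ m n • Dθ a := by
      obtain ⟨f, hf⟩ := Module.Projective.exists_dual_eq_one ℂ hv0
      have h := congrArg (fun t => TensorProduct.rid ℂ _ (LinearMap.lTensor _ f t)) hξ
      simpa [hf] using h
    have hdeg : ∀ i ∈ s, TensorProduct.map (LinearMap.mulLeft ℂ a) LinearMap.id (αc i)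
        ∈ tensorDeg 𝒜 ((m + i) + n, -(m + i)) := by
      intro i hi
      have h := mulLeft_mem_tensorDeg 𝒜 ha (hαc i hi)
      have he : ((m + n, -m) : ℤ × ℤ) + (i, -i) = ((m + i) + n, -(m + i)) := by
        ext <;> simp <;> ring
      rwa [he] at h
    have hda : (1 : A) ⊗ₜ[ℂ] a - a ⊗ₜ[ℂ] (1 : A) ∈ tensorDeg 𝒜 (m + n, -m) := by
      refine sub_mem ?_ ?_
      · simpa using tmul_mem_tensorDeg 𝒜 hone ha
      · simpa using tmul_mem_tensorDeg 𝒜 ha hone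
    have haω : TensorProduct.map (LinearMap.mulLeft ℂ a) LinearMap.id ωrep
        ∈ tensorDeg 𝒜 (m + n, -m) := by
      simpa using mulLeft_mem_tensorDeg 𝒜 ha hωdeg
    have hleft : φbar (L1 (D a)) = lphase θ m n • K2.mkQ ((1 : A) ⊗ₜ[ℂ] a - a ⊗ₜ[ℂ] (1 : A))
        - (n : ℂ) • (lphase θ m n •
            K2.mkQ (TensorProduct.map (LinearMap.mulLeft ℂ a) LinearMap.id ωrep)
          + ∑ i ∈ s, lphase θ (m + i) n •
            K2.mkQ (TensorProduct.map (LinearMap.mulLeft ℂ a) LinearMap.id (αc i))) := by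
      rw [hD n a hat, hlact, hαsum, map_add (TensorProduct.map _ _), map_add K2.mkQ, map_sum,
        map_sum, map_sub L1, map_sub φbar, map_smul, map_smul, map_add L1, map_add φbar,
        map_sum, map_sum, hL1 m n _ hda, hL1 m n _ haω]
      congr 3
      exact Finset.sum_congr rfl fun i hi => hL1 (m + i) n _ (hdeg i hi)
    have hright : φbar (Dθ a) = K2.mkQ ((1 : A) ⊗ₜ[ℂ] a - a ⊗ₜ[ℂ] (1 : A))
        - (n : ℂ) • (K2.mkQ (TensorProduct.map (LinearMap.mulLeft ℂ a) LinearMap.id ωrep)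
          + ∑ i ∈ s, phase θ (m + n, -m) (i, -i) •
            K2.mkQ (TensorProduct.map (LinearMap.mulLeft ℂ a) LinearMap.id (αc i))) := by
      rw [hDθ n a hat, hlactθ, map_sub φbar, map_smul, hφbar, hφbar, hαsum, hωωθ,
        map_add (TensorProduct.map _ _), map_add φ, map_add K2.mkQ, map_sum, map_sum φ,
        map_sum K2.mkQ, phaseMap_stp 𝒜 hφ hstp ha hωdeg, phase_zero_right, one_smul, hφω,
        map_sub φ, hφ _ _ _ hone _ ha, hφ _ _ _ ha _ hone, phase_zero_right, phase_zero_left,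
        one_smul, one_smul]
      congr 3
      refine Finset.sum_congr rfl fun i hi => ?_
      rw [phaseMap_stp 𝒜 hφ hstp ha (hαc i hi), hφα i hi, map_smul]
    have hsum : ∑ i ∈ s, ((n : ℂ) *
        (lphase θ (m + i) n - lphase θ m n * phase θ (m + n, -m) (i, -i))) •
        K2.mkQ (TensorProduct.map (LinearMap.mulLeft ℂ a) LinearMap.id (αc i)) = 0 := by
      have h := congrArg φbar heq
      rw [map_smul, hleft, hright] at h
      simp only [mul_smul, sub_smul]
      rw [← Finset.smul_sum, Finset.sum_sub_distrib, ← Finset.smul_sum]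
      rw [smul_sub, smul_comm (lphase θ m n) (n : ℂ), smul_add, smul_add, smul_add] at h
      rw [smul_sub, sub_eq_zero]
      have h' := sub_right_inj.mp h
      exact add_left_cancel h'
    -- The weight `2 ^ (-m)` common to all terms is divided out.
    have hz := eigen_sum_zero
      (((2 : ℂ) ^ m) • K2.mapQ K2
        (Algebra.TensorProduct.map (scaleHom 𝒜) (scaleHom 𝒜)).toLinearMap hK2s) s _
      (fun i hi => by
        rw [LinearMap.smul_apply, map_smul, Submodule.mkQ_apply, Submodule.mapQ_apply,
          AlgHom.toLinearMap_apply, scaleHom_tensor 𝒜 (hdeg i hi), Submodule.Quotient.mk_smul,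
          smul_smul, smul_smul, smul_smul]
        congr 1
        rw [mul_right_comm, ← zpow_add₀ two_ne_zero, show m + -(m + i) = -i by ring]) hsum k hks
    refine (smul_eq_zero.mp hz).resolve_left (mul_ne_zero (by exact_mod_cast hn0) ?_)
    exact sub_ne_zero.mpr (lphase_ne hθ m hn0 hk0)
  -- It suffices to find two coprime elements annihilating `α_k`.
  have fin : ∀ a b : A, IsCoprime a b →
      K2.mkQ (TensorProduct.map (LinearMap.mulLeft ℂ a) LinearMap.id (αc k)) = 0 →
      K2.mkQ (TensorProduct.map (LinearMap.mulLeft ℂ b) LinearMap.id (αc k)) = 0 → False := by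
    rintro a b ⟨c, d, hcd⟩ ha hb
    apply hkne
    have hmul : ∀ c a : A, lact c (K2.mkQ
        (TensorProduct.map (LinearMap.mulLeft ℂ a) LinearMap.id (αc k)))
        = K2.mkQ (TensorProduct.map (LinearMap.mulLeft ℂ (c * a)) LinearMap.id (αc k)) := by
      intro c a
      rw [hlact, ← LinearMap.comp_apply (TensorProduct.map _ _), ← TensorProduct.map_comp,
        LinearMap.mulLeft_mul, LinearMap.id_comp]
    have h1 := hmul c a
    have h2 := hmul d b
    rw [ha, map_zero] at h1
    rw [hb, map_zero] at h2
    have hadd : LinearMap.mulLeft ℂ (c * a) + LinearMap.mulLeft ℂ (d * b)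
        = (LinearMap.id : A →ₗ[ℂ] A) := by
      ext x
      rw [LinearMap.add_apply, LinearMap.mulLeft_apply, LinearMap.mulLeft_apply, ← add_mul, hcd,
        one_mul, LinearMap.id_apply]
    have hid : αc k = TensorProduct.map (LinearMap.mulLeft ℂ (c * a)) LinearMap.id (αc k)
        + TensorProduct.map (LinearMap.mulLeft ℂ (d * b)) LinearMap.id (αc k) := by
      rw [← LinearMap.add_apply, ← TensorProduct.map_add_left, hadd, TensorProduct.map_id,
        LinearMap.id_apply]
    rw [hid, map_add, ← h1, ← h2, add_zero]
  rcases le_total 0 n with hn | hn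
  · obtain ⟨N, rfl⟩ := Int.eq_ofNat_of_zero_le hn
    have hco : IsCoprime z1 z2 := ⟨z1s, z2s, hrel⟩
    refine fin (z1 ^ N) (z2 ^ N) hco.pow (key 0 _ ?_) (key (-N) _ ?_)
    · simpa using SetLike.pow_mem_graded N hz1
    · simpa using SetLike.pow_mem_graded N hz2
  · obtain ⟨N, hN⟩ := Int.eq_ofNat_of_zero_le (neg_nonneg.mpr hn)
    obtain rfl : n = -N := by omega
    have hco : IsCoprime z1s z2s := ⟨z1, z2, by rw [mul_comm z1, mul_comm z2, hrel]⟩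
    refine fin (z1s ^ N) (z2s ^ N) hco.pow (key 0 _ ?_) (key N _ ?_)
    · simpa using SetLike.pow_mem_graded N hz1s
    · simpa using SetLike.pow_mem_graded N hz2s
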